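/- arXiv:1609.08575 — 9 statements merged into one kernel-verified Lean document; each statement's English description precedes it below -/
import Mathlib

section
/- Let I ⊆ ℝ be an open interval, let α, β ∈ ℝ, and let w : ℝ → ℝ be three times differentiable on I, satisfy 2·w(t)·w''(t) = (w'(t))² + 3·w(t)⁴ + 8·t·w(t)³ + 4·(t² − α)·w(t)² − β² for all t ∈ I, and suppose every zero of w in I is an isolated zero. Then for all t ∈ I, w'''(t) = (6·w(t)² + 12·t·w(t) + 4·(t² − α))·w'(t) + 4·(w(t) + t)·w(t). -/
/-- If `w` is three times differentiable on an open interval `I ⊆ ℝ`, satisfies the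
rearranged fourth Painlevé equation (PIV) with parameters `α, β` on `I`, and every
zero of `w` in `I` is isolated, then `w` satisfies the third-order equation (PIV')
throughout `I`. -/
theorem real_piv_implies_piv' (I : Set ℝ) (hopen : IsOpen I) (hint : I.OrdConnected)
    (α β : ℝ) (w : ℝ → ℝ)
    (hd1 : ∀ t ∈ I, DifferentiableAt ℝ w t)
    (hd2 : ∀ t ∈ I, DifferentiableAt ℝ (deriv w) t)
    (hd3 : ∀ t ∈ I, DifferentiableAt ℝ (deriv (deriv w)) t)
    (heq : ∀ t ∈ I, 2 * w t * deriv (deriv w) t =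
      (deriv w t) ^ 2 + 3 * w t ^ 4 + 8 * t * w t ^ 3 + 4 * (t ^ 2 - α) * w t ^ 2 - β ^ 2)
    (hiso : ∀ a ∈ I, w a = 0 → ∃ δ > 0, ∀ t ∈ I, 0 < |t - a| → |t - a| < δ → w t ≠ 0) :
    ∀ t ∈ I, deriv (deriv (deriv w)) t =
      (6 * w t ^ 2 + 12 * t * w t + 4 * (t ^ 2 - α)) * deriv w t + 4 * (w t + t) * w t := by
  have hne : ∀ t ∈ I, w t ≠ 0 → deriv (deriv (deriv w)) t =
      (6 * w t ^ 2 + 12 * t * w t + 4 * (t ^ 2 - α)) * deriv w t + 4 * (w t + t) * w t := by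
    intro t ht hwt
    have h1 := (hd1 t ht).hasDerivAt
    have h2 := (hd2 t ht).hasDerivAt
    have h3 := (hd3 t ht).hasDerivAt
    have hid := hasDerivAt_id' t
    have hl := (h1.const_mul 2).mul h3
    have hr := ((((h2.pow 2).add ((h1.pow 4).const_mul 3)).add
      ((hid.const_mul 8).mul (h1.pow 3))).add
      ((((hid.pow 2).sub_const α).const_mul 4).mul (h1.pow 2))).sub_const (β ^ 2)
    have key := hl.unique (hr.congr_of_eventuallyEq
      (Filter.eventually_of_mem (hopen.mem_nhds ht) heq))
    apply mul_left_cancel₀ hwt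
    norm_num at key
    linear_combination key / 2
  intro a ha
  by_cases hwa : w a = 0
  swap
  · exact hne a ha hwa
  obtain ⟨δ, hδ, hball⟩ := hiso a ha hwa
  -- On a right neighbourhood of the zero, the third derivative is the continuous right-hand side.
  have hev : ∀ᶠ t in nhdsWithin a (Set.Ioi a),
      (6 * w t ^ 2 + 12 * t * w t + 4 * (t ^ 2 - α)) * deriv w t + 4 * (w t + t) * w t =
        deriv (deriv (deriv w)) t := by
    filter_upwards [self_mem_nhdsWithin, nhdsWithin_le_nhds (hopen.mem_nhds ha),
      nhdsWithin_le_nhds (Metric.ball_mem_nhds a hδ)] with t hta htI htδ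
    exact (hne t htI (hball t htI (abs_pos.2 (sub_ne_zero.2 (ne_of_gt hta))) htδ)).symm
  have hcont : ContinuousAt (fun t =>
      (6 * w t ^ 2 + 12 * t * w t + 4 * (t ^ 2 - α)) * deriv w t + 4 * (w t + t) * w t) a := by
    have h1 := (hd1 a ha).continuousAt
    have h2 := (hd2 a ha).continuousAt
    fun_prop
  have hright := hasDerivWithinAt_Ici_of_tendsto_deriv
    (fun t ht => (hd3 t ht).differentiableWithinAt)
    (hd3 a ha).continuousAt.continuousWithinAt
    (nhdsWithin_le_nhds (hopen.mem_nhds ha))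
    ((hcont.tendsto.mono_left nhdsWithin_le_nhds).congr' hev)
  exact (uniqueDiffWithinAt_Ici a).eq_deriv _ (hd3 a ha).hasDerivAt.hasDerivWithinAt hright
end

section
/- Let I ⊆ ℝ be an open interval, let α ∈ ℝ, and let w : ℝ → ℝ be three times differentiable on I and satisfy the rearranged fourth Painlevé equation with β = 0, namely 2·w(t)·w''(t) = (w'(t))² + 3·w(t)⁴ + 8·t·w(t)³ + 4·(t² − α)·w(t)² for all t ∈ I. If a ∈ I satisfies w(a) = 0 and a is an isolated zero of w (i.e., there is δ > 0 such that w(t) ≠ 0 for all t ∈ I with 0 < |t − a| < δ), then w''(a) ≠ 0. -/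
/-- Differentiating the rearranged fourth Painlevé equation with `β = 0` and cancelling `2 * w`
gives a third-order equation at each point where `w` does not vanish. -/
lemma deriv_deriv_deriv_eq_of_painleve_four {I : Set ℝ} (hopen : IsOpen I) {α : ℝ} {w : ℝ → ℝ}
    (heq : ∀ t ∈ I, 2 * w t * deriv (deriv w) t =
      (deriv w t) ^ 2 + 3 * w t ^ 4 + 8 * t * w t ^ 3 + 4 * (t ^ 2 - α) * w t ^ 2)
    {t : ℝ} (ht : t ∈ I) (hd1 : DifferentiableAt ℝ w t) (hd2 : DifferentiableAt ℝ (deriv w) t)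
    (hd3 : DifferentiableAt ℝ (deriv (deriv w)) t) (hw : w t ≠ 0) :
    deriv (deriv (deriv w)) t = (4 * w t + 4 * t) * w t +
      (6 * w t ^ 2 + 12 * t * w t + 4 * (t ^ 2 - α)) * deriv w t := by
  have h1 := hd1.hasDerivAt
  have h2 := hd2.hasDerivAt
  have h3 := hd3.hasDerivAt
  have hid := hasDerivAt_id' t
  have hl := (h1.const_mul 2).mul h3
  have hr := (((h2.pow 2).add ((h1.pow 4).const_mul 3)).add ((hid.const_mul 8).mul (h1.pow 3))).add
    ((((hid.pow 2).sub_const α).const_mul 4).mul (h1.pow 2))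
  have key := hl.unique (hr.congr_of_eventuallyEq (Filter.eventually_of_mem (hopen.mem_nhds ht) heq))
  simp only [Pi.pow_apply] at key
  norm_num at key
  apply mul_left_cancel₀ (mul_ne_zero two_ne_zero hw)
  linear_combination key

/-- A differential inequality `E' ≤ K * E` to the right of a zero of a nonnegative function `E`
forces `E` to vanish there. -/
lemma eq_zero_of_deriv_le_mul {E : ℝ → ℝ} {a b K : ℝ} (hE : ContinuousOn E (Set.Icc a b))
    (hd : ∀ t ∈ Set.Ioo a b, DifferentiableAt ℝ E t)
    (hle : ∀ t ∈ Set.Ioo a b, deriv E t ≤ K * E t) (hnonneg : ∀ t, 0 ≤ E t) (ha : E a = 0)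
    {t : ℝ} (ht : t ∈ Set.Icc a b) : E t = 0 := by
  have hexp (s : ℝ) : HasDerivAt (fun s => Real.exp (-K * s)) (Real.exp (-K * s) * (-K)) s := by
    simpa using ((hasDerivAt_id' s).const_mul (-K)).exp
  have hderiv (s : ℝ) (hs : s ∈ Set.Ioo a b) := (hd s hs).hasDerivAt.mul (hexp s)
  have hanti : AntitoneOn (E * fun s => Real.exp (-K * s)) (Set.Icc a b) := by
    apply antitoneOn_of_deriv_nonpos (convex_Icc a b)
    · exact hE.mul (by fun_prop)
    · rw [interior_Icc]
      exact fun s hs => (hderiv s hs).differentiableAt.differentiableWithinAt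
    · rw [interior_Icc]
      intro s hs
      rw [(hderiv s hs).deriv]
      nlinarith [hle s hs, Real.exp_pos (-K * s)]
  have h := hanti (Set.left_mem_Icc.2 (ht.1.trans ht.2)) ht ht.1
  simp only [Pi.mul_apply, ha, zero_mul] at h
  exact le_antisymm (nonpos_of_mul_nonpos_left h (Real.exp_pos _)) (hnonneg t)

/-- If `w` is three times differentiable on an open interval `I ⊆ ℝ` and satisfies the
rearranged fourth Painlevé equation with `β = 0` on `I`, then at any isolated zero
`a ∈ I` of `w` the second derivative `w''(a)` is nonzero. -/
theorem second_deriv_ne_zero_at_isolated_zero (I : Set ℝ) (hopen : IsOpen I)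
    (hint : I.OrdConnected) (α : ℝ) (w : ℝ → ℝ)
    (hd1 : ∀ t ∈ I, DifferentiableAt ℝ w t)
    (hd2 : ∀ t ∈ I, DifferentiableAt ℝ (deriv w) t)
    (hd3 : ∀ t ∈ I, DifferentiableAt ℝ (deriv (deriv w)) t)
    (heq : ∀ t ∈ I, 2 * w t * deriv (deriv w) t =
      (deriv w t) ^ 2 + 3 * w t ^ 4 + 8 * t * w t ^ 3 + 4 * (t ^ 2 - α) * w t ^ 2)
    (a : ℝ) (ha : a ∈ I) (hza : w a = 0)
    (hiso : ∃ δ > 0, ∀ t ∈ I, 0 < |t - a| ∧ |t - a| < δ → w t ≠ 0) :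
    deriv (deriv w) a ≠ 0 := by
  intro hw2
  obtain ⟨δ, hδ, hne⟩ := hiso
  have hw1 : deriv w a = 0 := by
    simpa [hza] using (heq a ha).symm
  obtain ⟨ε, hε, hball⟩ := Metric.isOpen_iff.1 hopen a ha
  obtain ⟨r, hr, hrmin⟩ := exists_between (lt_min hδ hε)
  have hrδ : r < δ := hrmin.trans_le (min_le_left _ _)
  have hrε : r < ε := hrmin.trans_le (min_le_right _ _)
  have hI : ∀ t ∈ Set.Icc a (a + r), t ∈ I := fun t ht => hball (by
    rw [Metric.mem_ball, Real.dist_eq, abs_lt]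
    constructor <;> linarith [ht.1, ht.2])
  have hnz : ∀ t ∈ Set.Ioc a (a + r), w t ≠ 0 := fun t ht =>
    hne t (hI t (Set.Ioc_subset_Icc_self ht)) (by
      rw [abs_of_pos (sub_pos.2 ht.1)]
      constructor <;> linarith [ht.1, ht.2])
  have hc0 : ContinuousOn w (Set.Icc a (a + r)) := fun t ht =>
    (hd1 t (hI t ht)).continuousAt.continuousWithinAt
  obtain ⟨M, hM⟩ := isCompact_Icc.exists_bound_of_continuousOn
    (show ContinuousOn (fun t => 4 * w t + 4 * t) (Set.Icc a (a + r)) by fun_prop)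
  obtain ⟨N, hN⟩ := isCompact_Icc.exists_bound_of_continuousOn
    (show ContinuousOn (fun t => 6 * w t ^ 2 + 12 * t * w t + 4 * (t ^ 2 - α))
      (Set.Icc a (a + r)) by fun_prop)
  have hE : ∀ t ∈ Set.Icc a (a + r), HasDerivAt
      (fun t => w t ^ 2 + deriv w t ^ 2 + deriv (deriv w) t ^ 2)
      (2 * w t * deriv w t + 2 * deriv w t * deriv (deriv w) t +
        2 * deriv (deriv w) t * deriv (deriv (deriv w)) t) t := fun t ht => by
    simpa using (((hd1 t (hI t ht)).hasDerivAt.fun_pow 2).fun_add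
      ((hd2 t (hI t ht)).hasDerivAt.fun_pow 2)).fun_add ((hd3 t (hI t ht)).hasDerivAt.fun_pow 2)
  have hzero := eq_zero_of_deriv_le_mul (K := 2 + M + N)
    (fun t ht => (hE t ht).continuousAt.continuousWithinAt)
    (fun t ht => (hE t (Set.Ioo_subset_Icc_self ht)).differentiableAt)
    (fun t ht => by
      have ht' := Set.Ioo_subset_Icc_self ht
      rw [(hE t ht').deriv, deriv_deriv_deriv_eq_of_painleve_four hopen heq (hI t ht')
        (hd1 t (hI t ht')) (hd2 t (hI t ht')) (hd3 t (hI t ht')) (hnz t ⟨ht.1, ht.2.le⟩)]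
      have hA := abs_le.1 (hM t ht')
      have hB := abs_le.1 (hN t ht')
      generalize 4 * w t + 4 * t = A at hA ⊢
      generalize 6 * w t ^ 2 + 12 * t * w t + 4 * (t ^ 2 - α) = B at hB ⊢
      generalize w t = x
      generalize deriv w t = y
      generalize deriv (deriv w) t = z
      have hAxz : 2 * A * (x * z) ≤ M * (x ^ 2 + z ^ 2) := by
        nlinarith [mul_nonneg (sub_nonneg.2 hA.2) (sq_nonneg (x + z)),
          mul_nonneg (neg_le_iff_add_nonneg.1 hA.1) (sq_nonneg (x - z))]
      have hByz : 2 * B * (y * z) ≤ N * (y ^ 2 + z ^ 2) := by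
        nlinarith [mul_nonneg (sub_nonneg.2 hB.2) (sq_nonneg (y + z)),
          mul_nonneg (neg_le_iff_add_nonneg.1 hB.1) (sq_nonneg (y - z))]
      have hM0 : 0 ≤ M := by linarith [hA.1, hA.2]
      have hN0 : 0 ≤ N := by linarith [hB.1, hB.2]
      nlinarith [sq_nonneg (x - y), sq_nonneg (y - z), mul_nonneg hM0 (sq_nonneg y),
        mul_nonneg hN0 (sq_nonneg x), sq_nonneg x, sq_nonneg z])
    (fun t => by positivity) (by simp [hza, hw1, hw2]) (Set.right_mem_Icc.2 (by linarith))
  refine hnz (a + r) (Set.right_mem_Ioc.2 (by linarith)) (pow_eq_zero_iff two_ne_zero |>.1 ?_)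
  linarith [sq_nonneg (w (a + r)), sq_nonneg (deriv w (a + r)),
    sq_nonneg (deriv (deriv w) (a + r))]
end

section
/- Let I ⊆ ℝ be an open interval, let a ∈ I, and let w : ℝ → ℝ be three times differentiable on I, satisfy the rearranged equation PIV₀, namely 2·w(t)·w''(t) = (w'(t))² + 3·w(t)⁴ + 8·t·w(t)³ + 4·t²·w(t)² for all t ∈ I, with w(a) = 0 and w(t) > 0 for all t ∈ I with t ≠ a. Define f : I → ℝ by f(t) = −√(w(t)) for t ≤ a and f(t) = +√(w(t)) for t ≥ a. Then f is twice differentiable on I and satisfies 4·f''(t) = f(t)·(3·f(t)² + 2·t)·(f(t)² + 2·t) for all t ∈ I. -/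
open Filter Topology

/-- If `f` is continuous at `a`, differentiable at all points near `a` other than `a`, and its
derivative has a limit `e` at `a`, then `f` has derivative `e` at `a`. -/
theorem hasDerivAt_of_tendsto_deriv_punctured {f : ℝ → ℝ} {a e : ℝ}
    (hd : ∀ᶠ t in 𝓝[≠] a, DifferentiableAt ℝ f t) (hc : ContinuousAt f a)
    (he : Tendsto (deriv f) (𝓝[≠] a) (𝓝 e)) : HasDerivAt f e a := by
  have hright : HasDerivWithinAt f e (Set.Ici a) a := by
    have hmem : {t | DifferentiableAt ℝ f t} ∈ 𝓝[>] a :=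
      nhdsWithin_mono a (fun t (ht : a < t) => ht.ne') hd
    exact hasDerivWithinAt_Ici_of_tendsto_deriv
      (fun t ht => DifferentiableAt.differentiableWithinAt ht) hc.continuousWithinAt hmem
      (he.mono_left (nhdsWithin_mono a fun t (ht : a < t) => ht.ne'))
  have hleft : HasDerivWithinAt f e (Set.Iic a) a := by
    have hmem : {t | DifferentiableAt ℝ f t} ∈ 𝓝[<] a :=
      nhdsWithin_mono a (fun t (ht : t < a) => ht.ne) hd
    exact hasDerivWithinAt_Iic_of_tendsto_deriv
      (fun t ht => DifferentiableAt.differentiableWithinAt ht) hc.continuousWithinAt hmem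
      (he.mono_left (nhdsWithin_mono a fun t (ht : t < a) => ht.ne))
  have h := hleft.union hright
  rwa [Set.Iic_union_Ici, hasDerivWithinAt_univ] at h

/-- A continuous square root of a positive differentiable function `w` has derivative
`w' / (2 f)`. The square root may have either sign. -/
theorem hasDerivAt_of_eventually_signed_sqrt {f w : ℝ → ℝ} {t : ℝ}
    (hw : DifferentiableAt ℝ w t) (hpos : 0 < w t)
    (h : (f =ᶠ[𝓝 t] fun s => √(w s)) ∨ f =ᶠ[𝓝 t] fun s => -√(w s)) :
    HasDerivAt f (deriv w t / (2 * f t)) t := by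
  have hs := hw.hasDerivAt.sqrt hpos.ne'
  rcases h with h | h
  · rw [h.eq_of_nhds]
    exact hs.congr_of_eventuallyEq h
  · rw [h.eq_of_nhds, mul_neg, div_neg]
    exact hs.neg.congr_of_eventuallyEq h

/-- If `g ^ 2` tends to `c` and `g` is eventually nonnegative unless `c = 0`, then `g` tends
to `√c`. -/
theorem tendsto_sqrt_of_tendsto_sq {α : Type*} {l : Filter α} {g : α → ℝ} {c : ℝ}
    (h : Tendsto (fun t => g t ^ 2) l (𝓝 c)) (hg : c ≠ 0 → ∀ᶠ t in l, 0 ≤ g t) :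
    Tendsto g l (𝓝 √c) := by
  have habs : Tendsto (fun t => |g t|) l (𝓝 √c) := by
    simpa only [Real.sqrt_sq_eq_abs] using h.sqrt
  by_cases hc : c = 0
  · subst hc
    rw [Real.sqrt_zero] at habs ⊢
    exact (tendsto_zero_iff_abs_tendsto_zero g).2 habs
  · refine habs.congr' ?_
    filter_upwards [hg hc] with t ht using abs_of_nonneg ht

/-- Let `w` be three times differentiable on an open interval `I`, a solution of the
rearranged equation PIV₀ (parameters `α = β = 0`), with an isolated zero at `a ∈ I` and
`w > 0` on `I \ {a}`. Then the signed square root `f` of `w` (negative left of `a`,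
positive right of `a`) is twice differentiable on `I` and satisfies
`4 f'' = f (3 f² + 2 t)(f² + 2 t)` on `I`. -/
theorem signed_sqrt_solves_second_order (I : Set ℝ) (hopen : IsOpen I)
    (hint : I.OrdConnected) (a : ℝ) (ha : a ∈ I) (w : ℝ → ℝ)
    (hd1 : ∀ t ∈ I, DifferentiableAt ℝ w t)
    (hd2 : ∀ t ∈ I, DifferentiableAt ℝ (deriv w) t)
    (hd3 : ∀ t ∈ I, DifferentiableAt ℝ (deriv (deriv w)) t)
    (heq : ∀ t ∈ I, 2 * w t * deriv (deriv w) t =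
      (deriv w t) ^ 2 + 3 * w t ^ 4 + 8 * t * w t ^ 3 + 4 * t ^ 2 * w t ^ 2)
    (hza : w a = 0) (hpos : ∀ t ∈ I, t ≠ a → 0 < w t)
    (f : ℝ → ℝ)
    (hf : ∀ t ∈ I, (t ≤ a → f t = -Real.sqrt (w t)) ∧ (a ≤ t → f t = Real.sqrt (w t))) :
    (∀ t ∈ I, DifferentiableAt ℝ f t) ∧ (∀ t ∈ I, DifferentiableAt ℝ (deriv f) t) ∧
      (∀ t ∈ I, 4 * deriv (deriv f) t = f t * (3 * f t ^ 2 + 2 * t) * (f t ^ 2 + 2 * t)) := by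
  have hsq : ∀ t ∈ I, f t ^ 2 = w t := by
    intro t ht
    have hw : 0 ≤ w t := by
      by_cases h : t = a
      · rw [h, hza]
      · exact (hpos t ht h).le
    rcases le_total t a with h | h
    · rw [(hf t ht).1 h, neg_sq, Real.sq_sqrt hw]
    · rw [(hf t ht).2 h, Real.sq_sqrt hw]
  have hfa : f a = 0 := by simpa [hza] using hsq a ha
  have hf0 : ∀ t ∈ I, t ≠ a → f t ≠ 0 := by
    intro t ht hta h0
    have := hpos t ht hta
    rw [← hsq t ht, h0] at this
    norm_num at this
  have hfcont : ContinuousAt f a := by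
    have h : Tendsto (fun t => f t ^ 2) (𝓝 a) (𝓝 0) := by
      have hw : Tendsto w (𝓝 a) (𝓝 0) := by
        simpa only [hza] using (hd1 a ha).continuousAt.tendsto
      refine hw.congr' ?_
      filter_upwards [hopen.mem_nhds ha] with t ht using (hsq t ht).symm
    have h' := tendsto_sqrt_of_tendsto_sq h fun h => absurd rfl h
    rw [Real.sqrt_zero] at h'
    rwa [ContinuousAt, hfa]
  have hderiv : ∀ t ∈ I, t ≠ a → HasDerivAt f (deriv w t / (2 * f t)) t := by
    intro t ht hta
    refine hasDerivAt_of_eventually_signed_sqrt (hd1 t ht) (hpos t ht hta) ?_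
    rcases lt_or_gt_of_ne hta with h | h
    · right
      filter_upwards [hopen.mem_nhds ht, Iio_mem_nhds h] with s hs hsa
      exact (hf s hs).1 hsa.le
    · left
      filter_upwards [hopen.mem_nhds ht, Ioi_mem_nhds h] with s hs hsa
      exact (hf s hs).2 hsa.le
  have hderiv2 : ∀ t ∈ I, t ≠ a →
      HasDerivAt (deriv f) (f t * (3 * f t ^ 2 + 2 * t) * (f t ^ 2 + 2 * t) / 4) t := by
    intro t ht hta
    have hft := hf0 t ht hta
    have hev : deriv f =ᶠ[𝓝 t] fun s => deriv w s / (2 * f s) := by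
      filter_upwards [hopen.mem_nhds ht, isOpen_ne.mem_nhds hta] with s hs hsa
      exact (hderiv s hs hsa).deriv
    have h := (hd2 t ht).hasDerivAt.div ((hderiv t ht hta).const_mul 2)
      (mul_ne_zero two_ne_zero hft)
    refine (h.congr_of_eventuallyEq hev).congr_deriv ?_
    have hpiv := heq t ht
    rw [← hsq t ht] at hpiv
    field_simp
    linear_combination 4 * hpiv
  have hnear : ∀ᶠ t in 𝓝[≠] a, t ∈ I ∧ t ≠ a :=
    Filter.Eventually.and (mem_nhdsWithin_of_mem_nhds (hopen.mem_nhds ha)) self_mem_nhdsWithin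
  have hlim : Tendsto (deriv f) (𝓝[≠] a) (𝓝 √(deriv (deriv w) a / 2)) := by
    have hsqlim : Tendsto (fun t => deriv f t ^ 2) (𝓝[≠] a) (𝓝 (deriv (deriv w) a / 2)) := by
      have hc : ContinuousAt (fun t => (2 * deriv (deriv w) t - 3 * w t ^ 3 - 8 * t * w t ^ 2
          - 4 * t ^ 2 * w t) / 4) a := by
        have := (hd1 a ha).continuousAt
        have := (hd3 a ha).continuousAt
        fun_prop
      have hc' := hc.tendsto.mono_left (nhdsWithin_le_nhds (s := {a}ᶜ))
      have hval : (2 * deriv (deriv w) a - 3 * w a ^ 3 - 8 * a * w a ^ 2 - 4 * a ^ 2 * w a) / 4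
          = deriv (deriv w) a / 2 := by
        rw [hza]; ring
      rw [hval] at hc'
      refine hc'.congr' ?_
      filter_upwards [hnear] with t ⟨ht, hta⟩
      have hw := (hpos t ht hta).ne'
      rw [(hderiv t ht hta).deriv, div_pow, mul_pow, hsq t ht]
      field_simp
      linear_combination 4 * heq t ht
    refine tendsto_sqrt_of_tendsto_sq hsqlim fun hne => ?_
    have hwpos : 0 < deriv (deriv w) a := by
      have h := (ge_of_tendsto' hsqlim fun t => sq_nonneg (deriv f t)).lt_of_ne' hne
      linarith
    have hwa : deriv w a = 0 := by simpa [hza] using (heq a ha).symm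
    have hslope := hasDerivAt_iff_tendsto_slope.1 (hd2 a ha).hasDerivAt
    filter_upwards [hnear, hslope.eventually_const_lt hwpos] with t ⟨ht, hta⟩ hst
    rw [slope_def_field, hwa, sub_zero] at hst
    rw [(hderiv t ht hta).deriv]
    rcases lt_or_gt_of_ne hta with h | h
    · have hft : f t ≤ 0 := by
        rw [(hf t ht).1 h.le]
        exact neg_nonpos.2 (Real.sqrt_nonneg _)
      have hwt : deriv w t ≤ 0 := by
        by_contra! hcon
        exact (div_neg_of_pos_of_neg hcon (sub_neg.2 h)).not_gt hst
      exact div_nonneg_of_nonpos hwt (by linarith)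
    · have hft : 0 ≤ f t := by
        rw [(hf t ht).2 h.le]
        exact Real.sqrt_nonneg _
      have hwt : 0 ≤ deriv w t := ((div_pos_iff_of_pos_right (sub_pos.2 h)).1 hst).le
      positivity
  have hHa := hasDerivAt_of_tendsto_deriv_punctured
    (hnear.mono fun t ht => (hderiv t ht.1 ht.2).differentiableAt) hfcont hlim
  have hHa2 : HasDerivAt (deriv f) (f a * (3 * f a ^ 2 + 2 * a) * (f a ^ 2 + 2 * a) / 4) a := by
    refine hasDerivAt_of_tendsto_deriv_punctured
      (hnear.mono fun t ht => (hderiv2 t ht.1 ht.2).differentiableAt) ?_ ?_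
    · rw [← hHa.deriv] at hlim
      exact continuousAt_iff_punctured_nhds.2 hlim
    · have hc : ContinuousAt
          (fun t => f t * (3 * f t ^ 2 + 2 * t) * (f t ^ 2 + 2 * t) / 4) a := by
        fun_prop
      refine (hc.tendsto.mono_left nhdsWithin_le_nhds).congr' ?_
      filter_upwards [hnear] with t ht using (hderiv2 t ht.1 ht.2).deriv.symm
  have hH2 : ∀ t ∈ I,
      HasDerivAt (deriv f) (f t * (3 * f t ^ 2 + 2 * t) * (f t ^ 2 + 2 * t) / 4) t := by
    intro t ht
    by_cases h : t = a
    · rw [h]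
      exact hHa2
    · exact hderiv2 t ht h
  refine ⟨fun t ht => ?_, fun t ht => (hH2 t ht).differentiableAt, fun t ht => ?_⟩
  · by_cases h : t = a
    · rw [h]
      exact hHa.differentiableAt
    · exact (hderiv t ht h).differentiableAt
  · rw [(hH2 t ht).deriv]
    ring
end

section
/- Let U ⊆ ℂ be a nonempty connected open set and let w : ℂ → ℂ be analytic on U and satisfy equation XXXII, namely 2·w(z)·w''(z) = (w'(z))² − 1 for all z ∈ U. Then there exist constants a, b, c ∈ ℂ with b² − 4·a·c = 1 such that w(z) = a·z² + b·z + c for all z ∈ U. -/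
/-- Two functions that agree on an open set have the same derivative there. -/
lemma hasDerivAt_unique_of_eqOn_isOpen {U : Set ℂ} (hopen : IsOpen U) {f g : ℂ → ℂ}
    (hfg : Set.EqOn f g U) {z f' g' : ℂ} (hz : z ∈ U) (hf : HasDerivAt f f' z)
    (hg : HasDerivAt g g' z) : f' = g' :=
  hf.unique (hg.congr_of_eventuallyEq (hfg.eventuallyEq_of_mem (hopen.mem_nhds hz)))

/-- The third derivative of a solution of `2 w w'' = (w')² − 1` vanishes. -/
lemma deriv_deriv_deriv_eq_zero_of_xxxii {U : Set ℂ} (hopen : IsOpen U) {w : ℂ → ℂ}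
    (hw : AnalyticOnNhd ℂ w U)
    (heq : ∀ z ∈ U, 2 * w z * deriv (deriv w) z = (deriv w z) ^ 2 - 1) :
    ∀ z ∈ U, deriv (deriv (deriv w)) z = 0 := by
  have h0 : ∀ z ∈ U, HasDerivAt w (deriv w z) z :=
    fun z hz => (hw z hz).differentiableAt.hasDerivAt
  have h1 : ∀ z ∈ U, HasDerivAt (deriv w) (deriv (deriv w) z) z :=
    fun z hz => (hw.deriv z hz).differentiableAt.hasDerivAt
  have h2 : ∀ z ∈ U, HasDerivAt (deriv (deriv w)) (deriv (deriv (deriv w)) z) z :=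
    fun z hz => (hw.deriv.deriv z hz).differentiableAt.hasDerivAt
  have h3 : ∀ z ∈ U, HasDerivAt (deriv (deriv (deriv w)))
      (deriv (deriv (deriv (deriv w))) z) z :=
    fun z hz => (hw.deriv.deriv.deriv z hz).differentiableAt.hasDerivAt
  have hmul : ∀ z ∈ U, w z * deriv (deriv (deriv w)) z = 0 := by
    intro z hz
    have h := hasDerivAt_unique_of_eqOn_isOpen hopen heq hz
      (((h0 z hz).const_mul 2).fun_mul (h2 z hz)) (((h1 z hz).fun_pow 2).sub_const 1)
    simpa using h
  intro z hz
  have h := hasDerivAt_unique_of_eqOn_isOpen hopen hmul hz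
    ((h0 z hz).fun_mul (h3 z hz)) (hasDerivAt_const z 0)
  rcases mul_eq_zero.mp (hmul z hz) with hwz | hwz
  · have hsq := heq z hz
    rw [hwz] at h hsq
    linear_combination deriv w z * h + deriv (deriv (deriv w)) z * hsq
  · exact hwz

/-- If `w` is analytic on a nonempty connected open set `U ⊆ ℂ` and satisfies
equation XXXII, `2 w w'' = (w')² − 1`, on `U`, then `w` is a quadratic
`w(z) = a z² + b z + c` with discriminant `b² − 4 a c = 1`. -/
theorem xxxii_solutions_quadratic (U : Set ℂ) (hne : U.Nonempty) (hconn : IsConnected U)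
    (hopen : IsOpen U) (w : ℂ → ℂ) (hw : AnalyticOnNhd ℂ w U)
    (heq : ∀ z ∈ U, 2 * w z * deriv (deriv w) z = (deriv w z) ^ 2 - 1) :
    ∃ a b c : ℂ, b ^ 2 - 4 * a * c = 1 ∧ ∀ z ∈ U, w z = a * z ^ 2 + b * z + c := by
  have hconst : ∀ (f g f' : ℂ → ℂ), (∀ z ∈ U, HasDerivAt f (f' z) z) →
      (∀ z ∈ U, HasDerivAt g (f' z) z) → ∃ k, ∀ z ∈ U, f z = g z + k := by
    intro f g f' hf hg
    obtain ⟨k, hk⟩ := hopen.exists_eq_add_of_deriv_eq hconn.isPreconnected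
      (fun z hz => (hf z hz).differentiableAt.differentiableWithinAt)
      (fun z hz => (hg z hz).differentiableAt.differentiableWithinAt)
      (fun z hz => (hf z hz).deriv.trans (hg z hz).deriv.symm)
    exact ⟨k, fun z hz => hk hz⟩
  obtain ⟨k, hk⟩ := hconst (deriv (deriv w)) (fun _ => 0) (fun _ => 0)
    (fun z hz => by
      simpa only [deriv_deriv_deriv_eq_zero_of_xxxii hopen hw heq z hz] using
        (hw.deriv.deriv z hz).differentiableAt.hasDerivAt)
    (fun z _ => hasDerivAt_const z 0)
  obtain ⟨b, hb⟩ := hconst (deriv w) (fun z => k * z) (fun _ => k)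
    (fun z hz => by
      simpa only [hk z hz, zero_add] using (hw.deriv z hz).differentiableAt.hasDerivAt)
    (fun z _ => by simpa using (hasDerivAt_id z).const_mul k)
  obtain ⟨c, hc⟩ := hconst w (fun z => k / 2 * z ^ 2 + b * z) (fun z => k * z + b)
    (fun z hz => by
      simpa only [hb z hz] using (hw z hz).differentiableAt.hasDerivAt)
    (fun z _ => by
      refine (((hasDerivAt_pow 2 z).const_mul (k / 2)).add
        ((hasDerivAt_id z).const_mul b)).congr_deriv ?_
      norm_num
      ring)
  refine ⟨k / 2, b, c, ?_, hc⟩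
  obtain ⟨z, hz⟩ := hne
  have h := heq z hz
  rw [hk z hz, hb z hz, hc z hz] at h
  linear_combination -h
end

section
/- Let U ⊆ ℂ be a nonempty connected open set and let u : ℂ → ℂ be analytic on U such that w = u² satisfies equation XXXII on U, namely 2·w(z)·w''(z) = (w'(z))² − 1 for all z ∈ U. Then u has no zeros in U and there exists a constant K ∈ ℂ such that 4·u(z)²·(u'(z))² = 4·K·u(z)² + 1 for all z ∈ U (equivalently, (u')² = K + 1/(4u²)). -/
/-- If `u` is analytic on a nonempty connected open set `U ⊆ ℂ` and `w = u²` satisfies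
equation XXXII, `2 w w'' = (w')² − 1`, on `U`, then `u` has no zeros in `U` and there
is a constant `K` with `4 u² (u')² = 4 K u² + 1` on `U` (i.e. `(u')² = K + 1/(4u²)`). -/
theorem xxxii_square_substitution_first_integral (U : Set ℂ) (hne : U.Nonempty)
    (hconn : IsConnected U) (hopen : IsOpen U) (u : ℂ → ℂ) (hu : AnalyticOnNhd ℂ u U)
    (heq : ∀ z ∈ U, 2 * (fun z => u z ^ 2) z * deriv (deriv (fun z => u z ^ 2)) z =
      (deriv (fun z => u z ^ 2) z) ^ 2 - 1) :
    (∀ z ∈ U, u z ≠ 0) ∧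
      ∃ K : ℂ, ∀ z ∈ U, 4 * u z ^ 2 * (deriv u z) ^ 2 = 4 * K * u z ^ 2 + 1 := by
  have hasDeriv_u : ∀ z ∈ U, HasDerivAt u (deriv u z) z := fun z hz =>
    (hu z hz).differentiableAt.hasDerivAt
  have hasDeriv_deriv_u : ∀ z ∈ U, HasDerivAt (deriv u) (deriv (deriv u) z) z := fun z hz =>
    (hu z hz).deriv.differentiableAt.hasDerivAt
  have deriv_sq : ∀ z ∈ U, deriv (fun z => u z ^ 2) z = 2 * u z * deriv u z := fun z hz => by
    simpa using ((hasDeriv_u z hz).fun_pow 2).deriv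
  have deriv_deriv_sq : ∀ z ∈ U, deriv (deriv (fun z => u z ^ 2)) z =
      2 * deriv u z * deriv u z + 2 * u z * deriv (deriv u) z := fun z hz => by
    have hev : deriv (fun z => u z ^ 2) =ᶠ[nhds z] fun z => 2 * u z * deriv u z :=
      Filter.eventuallyEq_of_mem (hopen.mem_nhds hz) deriv_sq
    rw [hev.deriv_eq]
    exact (((hasDeriv_u z hz).const_mul 2).fun_mul (hasDeriv_deriv_u z hz)).deriv
  have u_ne_zero : ∀ z ∈ U, u z ≠ 0 := fun z hz h0 => by
    have h := heq z hz
    simp [deriv_sq z hz, h0] at h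
  have u_ode : ∀ z ∈ U, 4 * u z ^ 3 * deriv (deriv u) z = -1 := fun z hz => by
    have h := heq z hz
    simp only [deriv_deriv_sq z hz, deriv_sq z hz] at h
    linear_combination h
  have hasDeriv_integral : ∀ z ∈ U,
      HasDerivAt (fun z => deriv u z ^ 2 - (4 * u z ^ 2)⁻¹) 0 z := fun z hz => by
    have hz0 := u_ne_zero z hz
    have h := ((hasDeriv_deriv_u z hz).fun_pow 2).fun_sub
      ((((hasDeriv_u z hz).fun_pow 2).const_mul 4).fun_inv (by simpa using hz0))
    refine h.congr_deriv ?_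
    norm_num
    field_simp
    linear_combination (2 * deriv u z) * u_ode z hz
  obtain ⟨K, hK⟩ := hopen.exists_is_const_of_deriv_eq_zero hconn.isPreconnected
    (fun z hz => (hasDeriv_integral z hz).differentiableAt.differentiableWithinAt)
    (fun z hz => (hasDeriv_integral z hz).deriv)
  refine ⟨u_ne_zero, K, fun z hz => ?_⟩
  have hz0 := u_ne_zero z hz
  rw [← hK z hz]
  field_simp
  ring
end

section
/- Let U ⊆ ℂ be a nonempty connected open set and let w : ℂ → ℂ be analytic on U and satisfy equation XXXII, namely 2·w(z)·w''(z) = (w'(z))² − 1 for all z ∈ U. Then there exists a constant a ∈ ℂ such that (w'(z))² = 1 + 4·a·w(z) for all z ∈ U. -/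
/-- Differentiating `2 w w'' = (w')² − 1` gives `w w''' = 0`. -/
lemma mul_deriv_deriv_deriv_eq_zero {U : Set ℂ} (hopen : IsOpen U) {w : ℂ → ℂ}
    (hw : AnalyticOnNhd ℂ w U)
    (heq : ∀ z ∈ U, 2 * w z * deriv (deriv w) z = (deriv w z) ^ 2 - 1) {z : ℂ} (hz : z ∈ U) :
    w z * deriv (deriv (deriv w)) z = 0 := by
  have h0 := (hw z hz).differentiableAt.hasDerivAt
  have h1 := (hw.deriv z hz).differentiableAt.hasDerivAt
  have h2 := (hw.deriv.deriv z hz).differentiableAt.hasDerivAt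
  have hl := (h0.const_mul 2).mul h2
  have hr := (h1.pow 2).sub_const 1
  have hev : (fun z => 2 * w z * deriv (deriv w) z) =ᶠ[nhds z] fun z => (deriv w z) ^ 2 - 1 :=
    Filter.eventually_of_mem (hopen.mem_nhds hz) heq
  have h := hl.unique (hr.congr_of_eventuallyEq hev)
  push_cast at h
  linear_combination h / 2

/-- If `w` is analytic on a nonempty connected open set `U ⊆ ℂ` and satisfies
equation XXXII, `2 w w'' = (w')² − 1`, on `U`, then there is a constant `a` with
`(w')² = 1 + 4 a w` on `U`. -/
theorem xxxii_first_integral (U : Set ℂ) (hne : U.Nonempty) (hconn : IsConnected U)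
    (hopen : IsOpen U) (w : ℂ → ℂ) (hw : AnalyticOnNhd ℂ w U)
    (heq : ∀ z ∈ U, 2 * w z * deriv (deriv w) z = (deriv w z) ^ 2 - 1) :
    ∃ a : ℂ, ∀ z ∈ U, (deriv w z) ^ 2 = 1 + 4 * a * w z := by
  obtain ⟨z₁, hz₁⟩ := hne
  have hthird : ∀ z ∈ U, deriv (deriv (deriv w)) z = 0 := by
    refine (hw.eq_zero_or_eq_zero_of_mul_eq_zero hw.deriv.deriv.deriv
      (fun z hz => mul_deriv_deriv_deriv_eq_zero hopen hw heq hz)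
      hconn.isPreconnected).resolve_left fun hzero => ?_
    have hev : w =ᶠ[nhds z₁] fun _ => 0 := Filter.eventually_of_mem (hopen.mem_nhds hz₁) hzero
    have h := heq z₁ hz₁
    rw [hzero z₁ hz₁, hev.deriv_eq] at h
    norm_num at h
  refine ⟨deriv (deriv w) z₁ / 2, fun z hz => ?_⟩
  have hconst : deriv (deriv w) z = deriv (deriv w) z₁ :=
    hopen.is_const_of_deriv_eq_zero hconn.isPreconnected
      hw.deriv.deriv.differentiableOn hthird hz hz₁
  rw [← hconst]
  linear_combination -heq z hz
end

section
/- Let U ⊆ ℂ be a nonempty connected open set and let w : ℂ → ℂ be analytic on U and satisfy equation XVII (in the case m = 2), namely 2·w(z)·w''(z) = (w'(z))² for all z ∈ U. Then there exist constants p, q ∈ ℂ such that w(z) = (p·z + q)² for all z ∈ U. -/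
/-- Differentiating `2 w w'' = (w')²` gives `w w''' = 0`. -/
theorem mul_deriv_deriv_deriv_eq_zero_of_two_mul_mul_deriv_deriv_eq {U : Set ℂ} (hopen : IsOpen U)
    {w : ℂ → ℂ} (hw : AnalyticOnNhd ℂ w U)
    (heq : ∀ z ∈ U, 2 * w z * deriv (deriv w) z = (deriv w z) ^ 2) {z : ℂ} (hz : z ∈ U) :
    w z * deriv (deriv (deriv w)) z = 0 := by
  have h0 := (hw z hz).differentiableAt.hasDerivAt
  have h1 := (hw.deriv z hz).differentiableAt.hasDerivAt
  have h2 := (hw.deriv.deriv z hz).differentiableAt.hasDerivAt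
  have hev : (fun z => 2 * w z * deriv (deriv w) z) =ᶠ[nhds z] fun z => (deriv w z) ^ 2 :=
    Filter.eventuallyEq_of_mem (hopen.mem_nhds hz) heq
  have h := (((h0.const_mul 2).mul h2).congr_of_eventuallyEq hev.symm).unique (h1.pow 2)
  simp only [Nat.cast_ofNat, Nat.add_one_sub_one, pow_one] at h
  linear_combination h / 2

/-- If `w` is analytic on a nonempty connected open set `U ⊆ ℂ` and satisfies
equation XVII (case m = 2), `2 w w'' = (w')²`, on `U`, then `w` is a perfect square
of a linear polynomial: `w(z) = (p z + q)²`. -/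
theorem xvii_solutions_perfect_square (U : Set ℂ) (hne : U.Nonempty)
    (hconn : IsConnected U) (hopen : IsOpen U) (w : ℂ → ℂ) (hw : AnalyticOnNhd ℂ w U)
    (heq : ∀ z ∈ U, 2 * w z * deriv (deriv w) z = (deriv w z) ^ 2) :
    ∃ p q : ℂ, ∀ z ∈ U, w z = (p * z + q) ^ 2 := by
  have hpre := hconn.isPreconnected
  rcases hw.eq_zero_or_eq_zero_of_mul_eq_zero hw.deriv.deriv.deriv (fun z hz =>
    mul_deriv_deriv_deriv_eq_zero_of_two_mul_mul_deriv_deriv_eq hopen hw heq hz) hpre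
    with hzero | hthird
  · exact ⟨0, 0, fun z hz => by simp [hzero z hz]⟩
  obtain ⟨c, hc⟩ := hopen.exists_is_const_of_deriv_eq_zero hpre
    hw.deriv.deriv.differentiableOn hthird
  rcases eq_or_ne c 0 with rfl | hc0
  · have hfirst : Set.EqOn (deriv w) 0 U := fun z hz => by
      have h := heq z hz
      rw [hc z hz, mul_zero] at h
      exact pow_eq_zero_iff two_ne_zero |>.mp h.symm
    obtain ⟨e, he⟩ := hopen.exists_is_const_of_deriv_eq_zero hpre hw.differentiableOn hfirst
    obtain ⟨q, hq⟩ := IsAlgClosed.exists_pow_nat_eq e two_pos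
    exact ⟨0, q, fun z hz => by rw [he z hz, zero_mul, zero_add, hq]⟩
  · have hlin : Set.EqOn (deriv fun z => deriv w z - c * z) 0 U := fun z hz => by
      have h := (hw.deriv z hz).differentiableAt.hasDerivAt.sub ((hasDerivAt_id z).const_mul c)
      exact h.deriv.trans (by simp [hc z hz])
    obtain ⟨d, hd⟩ := hopen.exists_is_const_of_deriv_eq_zero hpre
      (hw.deriv.differentiableOn.sub (by fun_prop)) hlin
    obtain ⟨s, hs⟩ := IsAlgClosed.exists_pow_nat_eq (2 * c) two_pos
    have hs0 : s ≠ 0 := by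
      rintro rfl
      simp [hc0] at hs
    refine ⟨c / s, d / s, fun z hz => ?_⟩
    have h := heq z hz
    have hdz : deriv w z = c * z + d := sub_eq_iff_eq_add'.mp (hd z hz)
    rw [hc z hz, hdz] at h
    field_simp
    linear_combination h + w z * hs
end

section
/- Let U ⊆ ℂ be a nonempty connected open set and let w : ℂ → ℂ be analytic on U and satisfy equation XXIX, namely 2·w(z)·w''(z) = (w'(z))² + 3·w(z)⁴ for all z ∈ U. Then there exists a constant k ∈ ℂ such that w''(z) = 2·w(z)³ + k for all z ∈ U. -/
/-- If `w` is analytic on a nonempty connected open set `U ⊆ ℂ` and satisfies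
equation XXIX, `2 w w'' = (w')² + 3 w⁴`, on `U`, then there is a constant `k` with
`w'' = 2 w³ + k` on `U`. -/
theorem xxix_second_deriv_integral (U : Set ℂ) (hne : U.Nonempty)
    (hconn : IsConnected U) (hopen : IsOpen U) (w : ℂ → ℂ) (hw : AnalyticOnNhd ℂ w U)
    (heq : ∀ z ∈ U, 2 * w z * deriv (deriv w) z = (deriv w z) ^ 2 + 3 * w z ^ 4) :
    ∃ k : ℂ, ∀ z ∈ U, deriv (deriv w) z = 2 * w z ^ 3 + k := by
  have hw₁ : AnalyticOnNhd ℂ (deriv w) U := hw.deriv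
  have hw₂ : AnalyticOnNhd ℂ (deriv (deriv w)) U := hw₁.deriv
  have hw₃ : AnalyticOnNhd ℂ (deriv (deriv (deriv w))) U := hw₂.deriv
  have key : ∀ z ∈ U,
      w z * (deriv (deriv (deriv w)) z - 6 * w z ^ 2 * deriv w z) = 0 := by
    intro z hz
    have d₀ := (hw z hz).differentiableAt.hasDerivAt
    have d₁ := (hw₁ z hz).differentiableAt.hasDerivAt
    have d₂ := (hw₂ z hz).differentiableAt.hasDerivAt
    have hl := (d₀.const_mul 2).fun_mul d₂
    have hr := (d₁.fun_pow 2).fun_add ((d₀.fun_pow 4).const_mul 3)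
    have h := hl.unique (hr.congr_of_eventuallyEq
      (Filter.eventually_of_mem (hopen.mem_nhds hz) heq))
    norm_num at h
    linear_combination h / 2
  have hv : AnalyticOnNhd ℂ
      (fun z => deriv (deriv (deriv w)) z - 6 * w z ^ 2 * deriv w z) U :=
    hw₃.sub ((analyticOnNhd_const.mul (hw.pow 2)).mul hw₁)
  rcases hw.eq_zero_or_eq_zero_of_mul_eq_zero hv key hconn.isPreconnected with h0 | h0
  · refine ⟨0, fun z hz => ?_⟩
    have hev : w =ᶠ[nhds z] fun _ => 0 := Filter.eventually_of_mem (hopen.mem_nhds hz) h0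
    have h2 : deriv (deriv w) z = 0 := by simpa using hev.deriv.deriv_eq
    simp [h2, h0 z hz]
  · have hd : ∀ z ∈ U, HasDerivAt (fun z => deriv (deriv w) z - 2 * w z ^ 3) 0 z := by
      intro z hz
      have d₀ := (hw z hz).differentiableAt.hasDerivAt
      have d₂ := (hw₂ z hz).differentiableAt.hasDerivAt
      refine (d₂.fun_sub ((d₀.fun_pow 3).const_mul 2)).congr_deriv ?_
      norm_num
      linear_combination h0 z hz
    obtain ⟨k, hk⟩ := hopen.exists_is_const_of_deriv_eq_zero hconn.isPreconnected
      (fun z hz => (hd z hz).differentiableAt.differentiableWithinAt)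
      (fun z hz => (hd z hz).deriv)
    exact ⟨k, fun z hz => by linear_combination hk z hz⟩
end

section
/- Let U ⊆ ℂ be a nonempty connected open set and let w : ℂ → ℂ be analytic on U and satisfy equation XXIX, namely 2·w(z)·w''(z) = (w'(z))² + 3·w(z)⁴ for all z ∈ U. Then there exists a constant K ∈ ℂ such that (w'(z))² = w(z)⁴ + K·w(z) for all z ∈ U. -/
/-- If `w` is analytic on a nonempty connected open set `U ⊆ ℂ` and satisfies
equation XXIX, `2 w w'' = (w')² + 3 w⁴`, on `U`, then there is a constant `K` with
`(w')² = w⁴ + K w` on `U`. -/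
theorem xxix_first_integral (U : Set ℂ) (hne : U.Nonempty)
    (hconn : IsConnected U) (hopen : IsOpen U) (w : ℂ → ℂ) (hw : AnalyticOnNhd ℂ w U)
    (heq : ∀ z ∈ U, 2 * w z * deriv (deriv w) z = (deriv w z) ^ 2 + 3 * w z ^ 4) :
    ∃ K : ℂ, ∀ z ∈ U, (deriv w z) ^ 2 = w z ^ 4 + K * w z := by
  by_cases hzero : ∀ z ∈ U, w z = 0
  · refine ⟨0, fun z hz => ?_⟩
    have h := heq z hz
    simp only [hzero z hz] at h ⊢
    linear_combination -h
  push Not at hzero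
  obtain ⟨z₀, hz₀, hwz₀⟩ := hzero
  have hev : ∀ᶠ z in nhds z₀, z ∈ U ∧ w z ≠ 0 :=
    (hopen.eventually_mem hz₀).and ((hw z₀ hz₀).continuousAt.eventually_ne hwz₀)
  obtain ⟨r, hr, hball⟩ := Metric.eventually_nhds_iff_ball.1 hev
  -- The first integral `((w')² - w⁴) / w` is constant on a disc free of zeros of `w`.
  have hderiv : ∀ z ∈ Metric.ball z₀ r,
      HasDerivAt (fun z => (deriv w z ^ 2 - w z ^ 4) / w z) 0 z := by
    intro z hz
    obtain ⟨hzU, hwz⟩ := hball z hz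
    have h₁ := (hw z hzU).differentiableAt.hasDerivAt
    have h₂ := (hw z hzU).deriv.differentiableAt.hasDerivAt
    refine (((h₂.fun_pow 2).fun_sub (h₁.fun_pow 4)).fun_div h₁ hwz).congr_deriv ?_
    rw [div_eq_zero_iff]
    left
    push_cast
    linear_combination deriv w z * heq z hzU
  have hconst : ∀ z ∈ Metric.ball z₀ r, (deriv w z ^ 2 - w z ^ 4) / w z =
      (deriv w z₀ ^ 2 - w z₀ ^ 4) / w z₀ := fun z hz =>
    Metric.isOpen_ball.is_const_of_deriv_eq_zero (convex_ball z₀ r).isPreconnected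
      (fun x hx => (hderiv x hx).differentiableAt.differentiableWithinAt)
      (fun x hx => (hderiv x hx).deriv) hz (Metric.mem_ball_self hr)
  refine ⟨(deriv w z₀ ^ 2 - w z₀ ^ 4) / w z₀, ?_⟩
  refine AnalyticOnNhd.eqOn_of_preconnected_of_eventuallyEq (f := fun z => deriv w z ^ 2)
    (g := fun z => w z ^ 4 + (deriv w z₀ ^ 2 - w z₀ ^ 4) / w z₀ * w z)
    (hw.deriv.fun_pow 2) ((hw.fun_pow 4).add (analyticOnNhd_const.mul hw))
    hconn.isPreconnected hz₀ ?_
  filter_upwards [Metric.ball_mem_nhds z₀ hr] with z hz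
  rw [← hconst z hz, div_mul_cancel₀ _ (hball z hz).2]
  ring
end
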